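/- Let F be a logarithmically homogeneous barrier with negative curvature for a regular cone K ⊂ ℝⁿ, let x, y ∈ int K, and define G = ∫₀¹ F''((1−α)x + αy) dα. Then (1/(1+σₓ(y−x)))·F''(x) ⪯ G ⪯ (1/(1−σₓ(x−y)))·F''(x), and (1−σₓ(x−y))·F''(y) ⪯ G ⪯ (1+σₓ(y−x))·F''(y). -/

import Mathlib

open scoped RealInnerProductSpace
open Set

noncomputable section

variable {E : Type*} [NormedAddCommGroup E] [InnerProductSpace ℝ E] [CompleteSpace E]

/-- The dual cone `K* = {s : ⟨s,x⟩ ≥ 0 for all x ∈ K}`. -/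
def dualCone (K : Set E) : Set E := {s | ∀ x ∈ K, 0 ≤ ⟪s, x⟫}

/-- `K` is a regular cone: closed, convex, a cone, pointed, with nonempty interior. -/
def IsRegularCone (K : Set E) : Prop :=
  IsClosed K ∧ Convex ℝ K ∧ (∀ x ∈ K, ∀ t : ℝ, 0 ≤ t → t • x ∈ K) ∧
    (∀ x, x ∈ K → -x ∈ K → x = 0) ∧ (interior K).Nonempty

/-- The Minkowski gauge `σ_x(h) = inf {β ≥ 0 : β • x - h ∈ K}`. -/
def mink (K : Set E) (x h : E) : ℝ := sInf {β : ℝ | 0 ≤ β ∧ β • x - h ∈ K}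

/-- The Hessian `F''(x)` of `F` at `x`, as a continuous linear map. -/
def Hess (F : E → ℝ) (x : E) : E →L[ℝ] E := fderiv ℝ (fun y => gradient F y) x

/-- The directional third derivative `F'''(x;h)`: the directional derivative of the Hessian
of `F` at `x` in the direction `h`, as a continuous linear map. -/
def D3 (F : E → ℝ) (x h : E) : E →L[ℝ] E := fderiv ℝ (fun y => Hess F y) x h

/-- The local norm `‖h‖ₓ = ⟨F''(x) h, h⟩^{1/2}`. -/
def localNorm (F : E → ℝ) (x h : E) : ℝ := Real.sqrt ⟪Hess F x h, h⟫

/-- `F` is a ϑ-logarithmically homogeneous barrier for `K`: a three times continuously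
differentiable convex function on `int K`, with positive definite Hessians, satisfying
`F (t • x) = F x - ϑ ln t`. -/
structure IsLHB (K : Set E) (ϑ : ℝ) (F : E → ℝ) : Prop where
  contDiff : ContDiffOn ℝ 3 F (interior K)
  convexOn : ConvexOn ℝ (interior K) F
  hess_posdef : ∀ x ∈ interior K, ∀ v : E, v ≠ 0 → 0 < ⟪Hess F x v, v⟫
  log_hom : ∀ x ∈ interior K, ∀ t : ℝ, 0 < t → F (t • x) = F x - ϑ * Real.log t

/-- `F` has negative curvature: `x ↦ ⟨F'(x), u⟩` is concave on `int K` for every `u ∈ K`. -/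
def NegCurv (K : Set E) (F : E → ℝ) : Prop :=
  ∀ u ∈ K, ConcaveOn ℝ (interior K) (fun x => ⟪gradient F x, u⟫)

/-!
Negative curvature makes `p ↦ F p - F (p + u)` convex on `int K` for `u ∈ K`, so `F''` is
antitone for the order of `K`. Log-homogeneity gives `t² F''(t x) = F''(x)`, and together these
turn every relation `a z - b w ∈ K` into `b² F''(z) ⪯ a² F''(w)`.

If `y - r x ∈ K` with `r > 0`, the point `(1 - α)x + αy` therefore has its Hessian bounded above by
`(1 - α + αr)⁻² F''(x)` and below by `r² (1 - α + αr)⁻² F''(y)`. Since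
`∫₀¹ (1 - α + αr)⁻² dα = 1/r`, integration gives `r F''(y) ⪯ G ⪯ (1/r) F''(x)`. The gauge provides
`r = 1 - σₓ(x - y)`, and `r = 1 / (1 + σₓ(y - x))` after exchanging `x` and `y`, which leaves `G`
unchanged.
-/

open Filter MeasureTheory Topology
open scoped Pointwise

section Cone

variable {V : Type*}

section TopologicalVectorSpace

variable [AddCommGroup V] [Module ℝ V] [TopologicalSpace V]

lemma exists_add_smul_mem_of_mem_interior [ContinuousAdd V] [ContinuousSMul ℝ V] {s : Set V}
    {x : V} (hx : x ∈ interior s) (v : V) : ∃ t ∈ Ioo (0 : ℝ) 1, x + t • v ∈ s := by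
  have hcont : ContinuousAt (fun t : ℝ ↦ x + t • v) 0 := by fun_prop
  have hmem : ∀ᶠ t in 𝓝[>] (0 : ℝ), x + t • v ∈ s :=
    (hcont.eventually_mem (by simpa using mem_interior_iff_mem_nhds.1 hx)).filter_mono
      nhdsWithin_le_nhds
  exact (Filter.Eventually.and (Ioo_mem_nhdsGT one_pos) hmem).exists

lemma add_mem_interior_cone [ContinuousAdd V] (K : PointedCone ℝ V) {x u : V}
    (hx : x ∈ interior (K : Set V)) (hu : u ∈ K) : x + u ∈ interior (K : Set V) :=
  interior_mono (add_subset_iff.2 fun _ hy _ hz ↦ K.add_mem hy hz)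
    (subset_interior_add_left (add_mem_add hx hu))

lemma smul_mem_interior_cone [ContinuousConstSMul ℝ V] (K : PointedCone ℝ V) {x : V}
    (hx : x ∈ interior (K : Set V)) {t : ℝ} (ht : 0 < t) : t • x ∈ interior (K : Set V) := by
  have hsub : t • (K : Set V) ⊆ (K : Set V) := smul_set_subset_iff.2 fun _ hy ↦ K.smul_mem ht.le hy
  refine interior_mono hsub ?_
  rw [interior_smul₀ ht.ne']
  exact smul_mem_smul_set hx

end TopologicalVectorSpace

variable [NormedAddCommGroup V] [InnerProductSpace ℝ V]

lemma IsRegularCone.exists_pointedCone {K : Set V} (hK : IsRegularCone K) :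
    ∃ C : PointedCone ℝ V, (C : Set V) = K := by
  obtain ⟨-, hconvex, hsmul, -, hne⟩ := hK
  obtain ⟨x, hx⟩ := hne.mono interior_subset
  refine ⟨{ carrier := K, add_mem' := fun {a b} ha hb ↦ ?_, zero_mem' := ?_,
            smul_mem' := fun c a ha ↦ hsmul a ha c c.2 }, rfl⟩
  · have hmid : (1 / 2 : ℝ) • a + (1 / 2 : ℝ) • b ∈ K :=
      hconvex ha hb (by norm_num) (by norm_num) (by norm_num)
    convert hsmul _ hmid 2 two_pos.le using 1
    module
  · simpa using hsmul x hx 0 le_rfl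

lemma mink_nonneg (K : Set V) (x h : V) : 0 ≤ mink K x h :=
  Real.sInf_nonneg fun _ hβ ↦ hβ.1

lemma mink_le {K : Set V} {x h : V} {β : ℝ} (hβ : 0 ≤ β) (hmem : β • x - h ∈ K) :
    mink K x h ≤ β :=
  csInf_le ⟨0, fun _ hγ ↦ hγ.1⟩ ⟨hβ, hmem⟩

lemma mink_smul_sub_mem {K : PointedCone ℝ V} (hK : IsClosed (K : Set V)) {x : V}
    (hx : x ∈ interior (K : Set V)) (h : V) : mink K x h • x - h ∈ K := by
  have hclosed : IsClosed {β : ℝ | 0 ≤ β ∧ β • x - h ∈ (K : Set V)} :=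
    isClosed_Ici.inter (hK.preimage (by fun_prop : Continuous fun β : ℝ ↦ β • x - h))
  have hne : {β : ℝ | 0 ≤ β ∧ β • x - h ∈ (K : Set V)}.Nonempty := by
    obtain ⟨t, ⟨ht, -⟩, hmem⟩ := exists_add_smul_mem_of_mem_interior hx (-h)
    refine ⟨t⁻¹, (inv_pos.2 ht).le, ?_⟩
    have hscaled : t⁻¹ • (x + t • -h) ∈ K := K.smul_mem (inv_pos.2 ht).le hmem
    simpa [smul_add, smul_smul, ht.ne', sub_eq_add_neg] using hscaled
  exact (hclosed.csInf_mem hne ⟨0, fun _ hβ ↦ hβ.1⟩).2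

lemma mink_sub_lt_one {K : Set V} {y : V} (x : V) (hy : y ∈ interior K) :
    mink K x (x - y) < 1 := by
  obtain ⟨t, ⟨ht₀, ht₁⟩, hmem⟩ := exists_add_smul_mem_of_mem_interior hy (-x)
  have hle : mink K x (x - y) ≤ 1 - t := by
    refine mink_le (sub_nonneg.2 ht₁.le) ?_
    convert hmem using 1
    module
  linarith

end Cone

section Hessian

variable {f g : E → ℝ} {s : Set E} {x : E}

lemma contDiffAt_gradient {m n : WithTop ℕ∞} (hf : ContDiffAt ℝ n f x) (hmn : m + 1 ≤ n) :
    ContDiffAt ℝ m (gradient f) x :=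
  (InnerProductSpace.toDual ℝ E).symm.contDiff.contDiffAt.comp x (hf.fderiv_right hmn)

lemma hasFDerivAt_gradient (hf : ContDiffAt ℝ 2 f x) :
    HasFDerivAt (gradient f) (Hess f x) x :=
  ((contDiffAt_gradient hf (m := 1) (by norm_num)).differentiableAt one_ne_zero).hasFDerivAt

lemma continuousAt_hess (hf : ContDiffAt ℝ 2 f x) : ContinuousAt (Hess f) x :=
  ((contDiffAt_gradient hf (m := 1) (by norm_num)).fderiv_right
    (m := 0) (by norm_num)).continuousAt

lemma hess_congr (h : f =ᶠ[𝓝 x] g) : Hess f x = Hess g x :=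
  h.gradient.fderiv_eq

lemma hess_sub_const (f : E → ℝ) (c : ℝ) (x : E) : Hess (fun y ↦ f y - c) x = Hess f x := by
  simp only [Hess, gradient, fderiv_sub_const]

lemma hess_comp_add_right (f : E → ℝ) (u x : E) :
    Hess (fun y ↦ f (y + u)) x = Hess f (x + u) := by
  simp only [Hess, gradient, fderiv_comp_add_right]
  exact fderiv_comp_add_right (f := gradient f) u

lemma gradient_comp_smul (f : E → ℝ) (c : ℝ) (x : E) :
    gradient (fun y ↦ f (c • y)) x = c • gradient f (c • x) := by
  simp only [gradient, fderiv_comp_smul, map_smul]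

lemma hess_comp_smul (f : E → ℝ) (c : ℝ) (x : E) :
    Hess (fun y ↦ f (c • y)) x = c ^ 2 • Hess f (c • x) := by
  simp only [Hess, gradient_comp_smul]
  calc fderiv ℝ (c • fun y ↦ gradient f (c • y)) x
      = c • fderiv ℝ (fun y ↦ gradient f (c • y)) x :=
        congrFun (fderiv_const_smul_field c) x
    _ = c ^ 2 • fderiv ℝ (gradient f) (c • x) := by
        rw [fderiv_comp_smul (f := gradient f), smul_smul, ← sq]

lemma hess_fun_sub (hf : ContDiffAt ℝ 2 f x) (hg : ContDiffAt ℝ 2 g x) :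
    Hess (fun y ↦ f y - g y) x = Hess f x - Hess g x := by
  have hgrad : gradient (fun y ↦ f y - g y) =ᶠ[𝓝 x] fun y ↦ gradient f y - gradient g y := by
    filter_upwards [hf.eventually (by simp), hg.eventually (by simp)] with y hfy hgy
    simp only [gradient, ← map_sub]
    rw [fderiv_fun_sub (hfy.differentiableAt two_ne_zero) (hgy.differentiableAt two_ne_zero)]
  exact hgrad.fderiv_eq.trans ((hasFDerivAt_gradient hf).sub (hasFDerivAt_gradient hg)).fderiv

lemma hasDerivAt_comp_add_smul {V W : Type*} [NormedAddCommGroup V] [NormedSpace ℝ V]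
    [NormedAddCommGroup W] [NormedSpace ℝ W] {φ : V → W} {φ' : V →L[ℝ] W} {p v : V} {t : ℝ}
    (hφ : HasFDerivAt φ φ' (p + t • v)) : HasDerivAt (fun r : ℝ ↦ φ (p + r • v)) (φ' v) t := by
  have hline : HasDerivAt (fun r : ℝ ↦ p + r • v) v t := by
    simpa using ((hasDerivAt_id t).smul_const v).const_add p
  exact hφ.comp_hasDerivAt t hline

lemma hasDerivAt_comp_add_smul_gradient {p v : E} {t : ℝ}
    (hf : DifferentiableAt ℝ f (p + t • v)) :
    HasDerivAt (fun r : ℝ ↦ f (p + r • v)) ⟪gradient f (p + t • v), v⟫ t := by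
  rw [inner_gradient_left]
  exact hasDerivAt_comp_add_smul hf.hasFDerivAt

lemma inner_hess_nonneg_of_convexOn (hs : IsOpen s) (hconvex : ConvexOn ℝ s f)
    (hf : ContDiffOn ℝ 2 f s) (hx : x ∈ s) (v : E) : 0 ≤ ⟪Hess f x v, v⟫ := by
  let line : ℝ →ᵃ[ℝ] E := AffineMap.lineMap x (x + v)
  have line_apply (t : ℝ) : line t = x + t • v := by
    simp [line, AffineMap.lineMap_apply, add_comm]
  let T : Set ℝ := line ⁻¹' s
  have hT : IsOpen T := hs.preimage (by fun_prop)
  have zero_mem : (0 : ℝ) ∈ T := by simpa [T, line_apply] using hx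
  have hderiv : ∀ t ∈ T, HasDerivAt (f ∘ line) ⟪gradient f (line t), v⟫ t := fun t ht ↦ by
    have hdiff := (hf.contDiffAt (hs.mem_nhds ht)).differentiableAt two_ne_zero
    simp only [Function.comp_def, line_apply] at hdiff ⊢
    exact hasDerivAt_comp_add_smul_gradient hdiff
  have hmono : MonotoneOn (fun t ↦ ⟪gradient f (line t), v⟫) T :=
    ((hconvex.comp_affineMap line).monotoneOn_deriv
      fun t ht ↦ (hderiv t ht).differentiableAt).congr fun t ht ↦ (hderiv t ht).deriv
  have hderiv₂ : HasDerivAt (fun t ↦ ⟪gradient f (line t), v⟫) ⟪Hess f x v, v⟫ 0 := by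
    simp only [line_apply]
    have hgrad : HasFDerivAt (gradient f) (Hess f x) (x + (0 : ℝ) • v) := by
      simpa using hasFDerivAt_gradient (hf.contDiffAt (hs.mem_nhds hx))
    simpa using (hasDerivAt_comp_add_smul hgrad).inner ℝ (hasDerivAt_const 0 v)
  rw [← hderiv₂.hasDerivWithinAt.derivWithin (hT.uniqueDiffWithinAt zero_mem)]
  exact hmono.derivWithin_nonneg

end Hessian

section Comparison

/-- `F` is logarithmically homogeneous of degree `ϑ` on `s`: the identity
`F (t • x) = F x - ϑ ln t` for `x ∈ s` and `t > 0`, separated from the other clauses of `IsLHB`. -/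
def IsLogHomogeneousOn {V : Type*} [SMul ℝ V] (ϑ : ℝ) (F : V → ℝ) (s : Set V) : Prop :=
  ∀ x ∈ s, ∀ t : ℝ, 0 < t → F (t • x) = F x - ϑ * Real.log t

variable {K : PointedCone ℝ E} {F : E → ℝ} {ϑ : ℝ}

-- The decrement `F p - F (p + u)` is minus the integral of the concave functions
-- `p ↦ ⟪gradient F (p + t • u), u⟫` over `t ∈ [0, 1]`.
lemma NegCurv.convexOn_sub_comp_add (hNC : NegCurv K F)
    (hF : DifferentiableOn ℝ F (interior K)) {u : E} (hu : u ∈ K) :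
    ConvexOn ℝ (interior K) (fun p ↦ F p - F (p + u)) := by
  refine ⟨K.convex.interior, fun p hp q hq a b ha hb hab ↦ ?_⟩
  have hmem {z : E} (hz : z ∈ interior (K : Set E)) {t : ℝ} (ht : 0 ≤ t) :
      z + t • u ∈ interior (K : Set E) := add_mem_interior_cone K hz (K.smul_mem ht hu)
  have hderiv {z : E} (hz : z ∈ interior (K : Set E)) {t : ℝ} (ht : 0 ≤ t) :
      HasDerivAt (fun r : ℝ ↦ F (z + r • u)) ⟪gradient F (z + t • u), u⟫ t :=
    hasDerivAt_comp_add_smul_gradient (hF.differentiableAt (isOpen_interior.mem_nhds (hmem hz ht)))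
  have hm : a • p + b • q ∈ interior (K : Set E) := K.convex.interior hp hq ha hb hab
  let gap : ℝ → ℝ := fun t ↦
    a * F (p + t • u) + b * F (q + t • u) - F (a • p + b • q + t • u)
  have gap_deriv {t : ℝ} (ht : 0 ≤ t) : HasDerivAt gap
      (a * ⟪gradient F (p + t • u), u⟫ + b * ⟪gradient F (q + t • u), u⟫
        - ⟪gradient F (a • p + b • q + t • u), u⟫) t :=
    (((hderiv hp ht).const_mul a).add ((hderiv hq ht).const_mul b)).sub (hderiv hm ht)
  have gap_antitone : AntitoneOn gap (Icc 0 1) := by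
    refine antitoneOn_of_hasDerivWithinAt_nonpos (convex_Icc 0 1)
      (fun t ht ↦ (gap_deriv ht.1).continuousAt.continuousWithinAt)
      (fun t ht ↦ (gap_deriv (interior_subset ht).1).hasDerivWithinAt) fun t ht ↦ ?_
    have ht₀ : 0 ≤ t := (interior_subset ht).1
    have hcomb : a • (p + t • u) + b • (q + t • u) = a • p + b • q + t • u := by
      calc a • (p + t • u) + b • (q + t • u) = a • p + b • q + (a + b) • t • u := by module
        _ = a • p + b • q + t • u := by rw [hab, one_smul]
    have hconcave := (hNC u hu).2 (hmem hp ht₀) (hmem hq ht₀) ha hb hab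
    simp only [hcomb, smul_eq_mul] at hconcave
    exact sub_nonpos.2 hconcave
  have hle : gap 1 ≤ gap 0 :=
    gap_antitone (left_mem_Icc.2 zero_le_one) (right_mem_Icc.2 zero_le_one) zero_le_one
  simp only [gap, one_smul, zero_smul, add_zero] at hle
  simp only [smul_eq_mul]
  linarith

lemma NegCurv.inner_hess_add_le (hNC : NegCurv K F) (hF : ContDiffOn ℝ 2 F (interior K))
    {w u : E} (hw : w ∈ interior (K : Set E)) (hu : u ∈ K) (v : E) :
    ⟪Hess F (w + u) v, v⟫ ≤ ⟪Hess F w v, v⟫ := by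
  have hmaps : MapsTo (· + u) (interior (K : Set E)) (interior K) :=
    fun p hp ↦ add_mem_interior_cone K hp hu
  have hFu : ContDiffOn ℝ 2 (fun p ↦ F (p + u)) (interior K) := hF.comp (by fun_prop) hmaps
  have hnhds := isOpen_interior.mem_nhds hw
  have hnonneg := inner_hess_nonneg_of_convexOn isOpen_interior
    (hNC.convexOn_sub_comp_add (hF.differentiableOn two_ne_zero) hu) (hF.sub hFu) hw v
  rw [hess_fun_sub (hF.contDiffAt hnhds) (hFu.contDiffAt hnhds), hess_comp_add_right,
    sub_apply, inner_sub_left] at hnonneg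
  exact sub_nonneg.1 hnonneg

lemma IsLogHomogeneousOn.sq_smul_hess_smul {s : Set E} {x : E}
    (hlog : IsLogHomogeneousOn ϑ F s) (hs : s ∈ 𝓝 x) {t : ℝ} (ht : 0 < t) :
    t ^ 2 • Hess F (t • x) = Hess F x := by
  rw [← hess_comp_smul, ← hess_sub_const F (ϑ * Real.log t)]
  refine hess_congr ?_
  filter_upwards [hs] with z hz using hlog z hz t ht

lemma NegCurv.sq_mul_inner_hess_le (hNC : NegCurv K F) (hF : ContDiffOn ℝ 2 F (interior K))
    (hlog : IsLogHomogeneousOn ϑ F (interior (K : Set E)))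
    {z w : E} (hz : z ∈ interior (K : Set E)) (hw : w ∈ interior (K : Set E)) {a b : ℝ}
    (ha : 0 < a) (hb : 0 < b) (hzw : a • z - b • w ∈ K) (v : E) :
    b ^ 2 * ⟪Hess F z v, v⟫ ≤ a ^ 2 * ⟪Hess F w v, v⟫ := by
  have hanti : ⟪Hess F (a • z) v, v⟫ ≤ ⟪Hess F (b • w) v, v⟫ := by
    simpa using hNC.inner_hess_add_le hF (smul_mem_interior_cone K hw hb) hzw v
  have hscale {x : E} (hx : x ∈ interior (K : Set E)) {t : ℝ} (ht : 0 < t) :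
      ⟪Hess F x v, v⟫ = t ^ 2 * ⟪Hess F (t • x) v, v⟫ := by
    rw [← hlog.sq_smul_hess_smul (isOpen_interior.mem_nhds hx) ht, smul_apply, real_inner_smul_left]
  calc b ^ 2 * ⟪Hess F z v, v⟫
      = a ^ 2 * (b ^ 2 * ⟪Hess F (a • z) v, v⟫) := by rw [hscale hz ha]; ring
    _ ≤ a ^ 2 * (b ^ 2 * ⟪Hess F (b • w) v, v⟫) := by gcongr
    _ = a ^ 2 * ⟪Hess F w v, v⟫ := by rw [← hscale hw hb]

end Comparison

section Integral

lemma one_sub_add_mul_pos {r α : ℝ} (hr : 0 < r) (hα : α ∈ Icc (0 : ℝ) 1) :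
    0 < 1 - α + α * r := by
  simpa using convex_Ioi (0 : ℝ) (mem_Ioi.2 one_pos) (mem_Ioi.2 hr)
    (sub_nonneg.2 hα.2) hα.1 (by ring)

lemma continuousOn_one_div_one_sub_add_mul_sq {r : ℝ} (hr : 0 < r) :
    ContinuousOn (fun α : ℝ ↦ 1 / (1 - α + α * r) ^ 2) (Icc 0 1) :=
  ContinuousOn.div (by fun_prop) (by fun_prop)
    fun _ hα ↦ pow_ne_zero 2 (one_sub_add_mul_pos hr hα).ne'

lemma integral_one_div_one_sub_add_mul_sq {r : ℝ} (hr : 0 < r) :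
    ∫ α in (0 : ℝ)..1, 1 / (1 - α + α * r) ^ 2 = 1 / r := by
  have hderiv : ∀ α ∈ uIcc (0 : ℝ) 1, HasDerivAt (fun α ↦ α / (1 - α + α * r))
      (1 / (1 - α + α * r) ^ 2) α := by
    intro α hα
    rw [uIcc_of_le zero_le_one] at hα
    have hden : HasDerivAt (fun α : ℝ ↦ 1 - α + α * r) (-1 + r) α := by
      simpa using ((hasDerivAt_id' α).const_sub 1).fun_add ((hasDerivAt_id' α).mul_const r)
    refine ((hasDerivAt_id' α).div hden (one_sub_add_mul_pos hr hα).ne').congr_deriv ?_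
    congr 1
    ring
  have hint : IntervalIntegrable (fun α : ℝ ↦ 1 / (1 - α + α * r) ^ 2) volume 0 1 :=
    (continuousOn_one_div_one_sub_add_mul_sq hr).intervalIntegrable_of_Icc zero_le_one
  simpa using intervalIntegral.integral_eq_sub_of_hasDerivAt hderiv hint

lemma integral_le_of_sq_mul_le {φ : ℝ → ℝ} {r A : ℝ} (hr : 0 < r)
    (hφ : ContinuousOn φ (Icc 0 1)) (h : ∀ α ∈ Icc (0 : ℝ) 1, (1 - α + α * r) ^ 2 * φ α ≤ A) :
    ∫ α in (0 : ℝ)..1, φ α ≤ 1 / r * A := by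
  rw [← integral_one_div_one_sub_add_mul_sq hr, ← intervalIntegral.integral_mul_const]
  refine intervalIntegral.integral_mono_on zero_le_one
    (hφ.intervalIntegrable_of_Icc zero_le_one)
    (((continuousOn_one_div_one_sub_add_mul_sq hr).mul
      continuousOn_const).intervalIntegrable_of_Icc zero_le_one)
    fun α hα ↦ ?_
  rw [one_div_mul_eq_div, le_div_iff₀' (pow_pos (one_sub_add_mul_pos hr hα) 2)]
  exact h α hα

lemma le_integral_of_le_sq_mul {φ : ℝ → ℝ} {r A : ℝ} (hr : 0 < r)
    (hφ : ContinuousOn φ (Icc 0 1)) (h : ∀ α ∈ Icc (0 : ℝ) 1, A ≤ (1 - α + α * r) ^ 2 * φ α) :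
    1 / r * A ≤ ∫ α in (0 : ℝ)..1, φ α := by
  have hneg : ∫ α in (0 : ℝ)..1, -φ α ≤ 1 / r * -A :=
    integral_le_of_sq_mul_le hr hφ.neg fun α hα ↦ by simpa using h α hα
  rw [intervalIntegral.integral_neg] at hneg
  linarith

end Integral

section MeanHessian

/-- The average `∫₀¹ F''((1 - α)x + αy) dα` of the Hessian of `F` over the segment from `x` to
`y`, as a Bochner integral of operators; this is the matrix `G` of the main theorem. -/
def meanHess (F : E → ℝ) (x y : E) : E →L[ℝ] E :=
  ∫ α in (0 : ℝ)..1, Hess F ((1 - α) • x + α • y)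

lemma meanHess_comm (F : E → ℝ) (x y : E) : meanHess F x y = meanHess F y x := by
  simpa [meanHess, add_comm] using
    (intervalIntegral.integral_comp_sub_left (a := 0) (b := 1)
      (fun α : ℝ ↦ Hess F ((1 - α) • x + α • y)) 1).symm

variable {F : E → ℝ} {s : Set E} {x y : E}

lemma continuousOn_hess_segment (hs : IsOpen s) (hconvex : Convex ℝ s)
    (hF : ContDiffOn ℝ 2 F s) (hx : x ∈ s) (hy : y ∈ s) :
    ContinuousOn (fun α : ℝ ↦ Hess F ((1 - α) • x + α • y)) (Icc 0 1) := by
  have hcont : ContinuousOn (Hess F) s := fun z hz ↦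
    (continuousAt_hess (hF.contDiffAt (hs.mem_nhds hz))).continuousWithinAt
  exact hcont.comp (by fun_prop) fun α hα ↦
    hconvex hx hy (sub_nonneg.2 hα.2) hα.1 (sub_add_cancel 1 α)

lemma inner_meanHess_apply
    (hcont : ContinuousOn (fun α : ℝ ↦ Hess F ((1 - α) • x + α • y)) (Icc 0 1)) (v w : E) :
    ⟪meanHess F x y v, w⟫ = ∫ α in (0 : ℝ)..1, ⟪Hess F ((1 - α) • x + α • y) v, w⟫ := by
  have hint := hcont.intervalIntegrable_of_Icc (μ := volume) zero_le_one
  have hint_apply := (hcont.clm_apply (continuousOn_const (c := v))).intervalIntegrable_of_Icc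
    (μ := volume) zero_le_one
  rw [meanHess, ContinuousLinearMap.intervalIntegral_apply hint, real_inner_comm]
  simpa [real_inner_comm] using ((innerSL ℝ w).intervalIntegral_comp_comm hint_apply).symm

variable {K : PointedCone ℝ E} {ϑ r : ℝ}

-- With `z = (1 - α)x + αy` and `c = 1 - α + αr`, both `z - c x = α(y - r x)` and
-- `c y - r z = (1 - α)(y - r x)` lie in `K`.
lemma NegCurv.meanHess_bounds_of_sub_smul_mem (hNC : NegCurv K F)
    (hF : ContDiffOn ℝ 2 F (interior K))
    (hlog : IsLogHomogeneousOn ϑ F (interior (K : Set E)))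
    (hx : x ∈ interior (K : Set E)) (hy : y ∈ interior (K : Set E)) (hr : 0 < r)
    (hxy : y - r • x ∈ K) (v : E) :
    ⟪meanHess F x y v, v⟫ ≤ 1 / r * ⟪Hess F x v, v⟫ ∧
      r * ⟪Hess F y v, v⟫ ≤ ⟪meanHess F x y v, v⟫ := by
  have hcont := continuousOn_hess_segment isOpen_interior K.convex.interior hF hx hy
  have hcont_form : ContinuousOn (fun α : ℝ ↦ ⟪Hess F ((1 - α) • x + α • y) v, v⟫) (Icc 0 1) :=
    (hcont.clm_apply continuousOn_const).inner continuousOn_const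
  have hseg : ∀ α ∈ Icc (0 : ℝ) 1, (1 - α) • x + α • y ∈ interior (K : Set E) := fun α hα ↦
    K.convex.interior hx hy (sub_nonneg.2 hα.2) hα.1 (sub_add_cancel 1 α)
  rw [inner_meanHess_apply hcont]
  constructor
  · refine integral_le_of_sq_mul_le hr hcont_form fun α hα ↦ ?_
    have hmem : (1 : ℝ) • ((1 - α) • x + α • y) - (1 - α + α * r) • x ∈ K := by
      convert K.smul_mem hα.1 hxy using 1
      module
    simpa using hNC.sq_mul_inner_hess_le hF hlog (hseg α hα) hx one_pos
      (one_sub_add_mul_pos hr hα) hmem v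
  · have hlower : 1 / r * (r ^ 2 * ⟪Hess F y v, v⟫) ≤
        ∫ α in (0 : ℝ)..1, ⟪Hess F ((1 - α) • x + α • y) v, v⟫ := by
      refine le_integral_of_le_sq_mul hr hcont_form fun α hα ↦ ?_
      have hmem : (1 - α + α * r) • y - r • ((1 - α) • x + α • y) ∈ K := by
        convert K.smul_mem (sub_nonneg.2 hα.2) hxy using 1
        module
      exact hNC.sq_mul_inner_hess_le hF hlog hy (hseg α hα) (one_sub_add_mul_pos hr hα) hr hmem v
    convert hlower using 1
    field_simp

end MeanHessian

theorem stmt5_general {K : PointedCone ℝ E} {ϑ : ℝ} {F : E → ℝ} (hK : IsClosed (K : Set E))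
    (hF : ContDiffOn ℝ 2 F (interior K))
    (hlog : IsLogHomogeneousOn ϑ F (interior (K : Set E)))
    (hNC : NegCurv K F) {x y : E} (hx : x ∈ interior (K : Set E))
    (hy : y ∈ interior (K : Set E)) :
    (∀ v, (1 / (1 + mink K x (y - x))) * ⟪Hess F x v, v⟫ ≤ ⟪meanHess F x y v, v⟫) ∧
    (∀ v, ⟪meanHess F x y v, v⟫ ≤ (1 / (1 - mink K x (x - y))) * ⟪Hess F x v, v⟫) ∧
    (∀ v, (1 - mink K x (x - y)) * ⟪Hess F y v, v⟫ ≤ ⟪meanHess F x y v, v⟫) ∧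
    (∀ v, ⟪meanHess F x y v, v⟫ ≤ (1 + mink K x (y - x)) * ⟪Hess F y v, v⟫) := by
  set σ := mink K x (x - y)
  set τ := mink K x (y - x)
  have hσ : 0 < 1 - σ := sub_pos.2 (mink_sub_lt_one x hy)
  have hτ : 0 < 1 + τ := add_pos_of_pos_of_nonneg one_pos (mink_nonneg K x (y - x))
  have hσ_mem : y - (1 - σ) • x ∈ K := by
    convert mink_smul_sub_mem hK hx (x - y) using 1
    module
  have hτ_mem : x - (1 / (1 + τ)) • y ∈ K := by
    have hgauge : τ • x - (y - x) ∈ K := mink_smul_sub_mem hK hx (y - x)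
    convert K.smul_mem (one_div_pos.2 hτ).le hgauge using 1
    match_scalars <;> field_simp
    ring
  have hσ_bounds := hNC.meanHess_bounds_of_sub_smul_mem hF hlog hx hy hσ hσ_mem
  have hτ_bounds := hNC.meanHess_bounds_of_sub_smul_mem hF hlog hy hx (one_div_pos.2 hτ) hτ_mem
  rw [meanHess_comm, one_div_one_div] at hτ_bounds
  exact ⟨fun v ↦ (hτ_bounds v).2, fun v ↦ (hσ_bounds v).1, fun v ↦ (hσ_bounds v).2,
    fun v ↦ (hτ_bounds v).1⟩

/-- For a logarithmically homogeneous barrier `F` with negative curvature on a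
regular cone `K` and `x, y ∈ int K`, the matrix `G = ∫₀¹ F''((1−α)x + αy) dα` satisfies
`(1/(1+σₓ(y−x))) F''(x) ⪯ G ⪯ (1/(1−σₓ(x−y))) F''(x)` and
`(1−σₓ(x−y)) F''(y) ⪯ G ⪯ (1+σₓ(y−x)) F''(y)` (as quadratic forms). -/
theorem stmt5 {n : ℕ} (K : Set (EuclideanSpace ℝ (Fin n))) (ϑ : ℝ)
    (F : EuclideanSpace ℝ (Fin n) → ℝ)
    (hK : IsRegularCone K) (hF : IsLHB K ϑ F) (hNC : NegCurv K F)
    (x : EuclideanSpace ℝ (Fin n)) (hx : x ∈ interior K)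
    (y : EuclideanSpace ℝ (Fin n)) (hy : y ∈ interior K) :
    let G : EuclideanSpace ℝ (Fin n) →L[ℝ] EuclideanSpace ℝ (Fin n) :=
      ∫ α in (0:ℝ)..1, Hess F ((1 - α) • x + α • y)
    (∀ v, (1 / (1 + mink K x (y - x))) * ⟪Hess F x v, v⟫ ≤ ⟪G v, v⟫) ∧
    (∀ v, ⟪G v, v⟫ ≤ (1 / (1 - mink K x (x - y))) * ⟪Hess F x v, v⟫) ∧
    (∀ v, (1 - mink K x (x - y)) * ⟪Hess F y v, v⟫ ≤ ⟪G v, v⟫) ∧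
    (∀ v, ⟪G v, v⟫ ≤ (1 + mink K x (y - x)) * ⟪Hess F y v, v⟫) := by
  obtain ⟨C, rfl⟩ := hK.exists_pointedCone
  exact stmt5_general hK.1 (hF.contDiff.of_le (by norm_num)) hF.log_hom hNC hx hy
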